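/- (Growth exponents of expected face numbers.) Fix r ≥ 0 and reals α_0, …, α_r > 0 with α_i ∉ ℤ for all i and α_i − α_j ∉ ℤ for i ≠ j. Set β_i = i + 1 − α_i, β* = max{β_0, …, β_r}, k* = ⌊β*⌋, let i* be the unique index with β_{i*} = β*, and for k ≤ r set β*_k = max{β_k, …, β_r}. For each n consider the upper-model random complex in Δ_n with parameters p_σ = n^{−α_i} for dim σ = i ≤ r and p_σ = 0 for dim σ > r, and let E_n(f_k) denote the expected number of k-dimensional simplices, so that E_n(f_k) = C(n+1, k+1)·(1 − ∏_{i=k}^{r} (1 − n^{−α_i})^{C(n−k, i−k)}). Assume k* ≥ 0. Then for every k ∈ {0, …, r} the limit γ_k = lim_{n→∞} log E_n(f_k) / log n exists and equals: k + 1 if k < k*; β* if k* ≤ k ≤ i*; and β*_k if k > i*. In particular γ_k is constant and maximal, equal to β*, for all k with k* ≤ k ≤ i*. -/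

import Mathlib

open Finset

/-- The full simplex `Δₙ`: all nonempty subsets of `[n] = {0,…,n}`. -/
def simplexAll (n : ℕ) : Finset (Finset (Fin (n+1))) :=
  Finset.univ.filter fun σ => σ.Nonempty

/-- The boundary `∂Δₙ`: all nonempty proper subsets of `[n]`. -/
def bdry (n : ℕ) : Finset (Finset (Fin (n+1))) :=
  Finset.univ.filter fun σ => σ.Nonempty ∧ σ ≠ Finset.univ

/-- A hypergraph is a simplicial complex if it is closed under passing to
nonempty subsets. -/
def IsComplex {n : ℕ} (X : Finset (Finset (Fin (n+1)))) : Prop :=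
  ∀ σ ∈ X, ∀ τ : Finset (Fin (n+1)), τ ⊆ σ → τ.Nonempty → τ ∈ X

instance {n : ℕ} (X : Finset (Finset (Fin (n+1)))) : Decidable (IsComplex X) :=
  inferInstanceAs (Decidable (∀ σ ∈ X, ∀ τ : Finset (Fin (n+1)), τ ⊆ σ → τ.Nonempty → τ ∈ X))

/-- The dual hypergraph `c(X) = {σ̂ : σ ∈ ∂Δₙ, σ ∉ X}`, where `σ̂ = [n] \ σ`. -/
def dual {n : ℕ} (X : Finset (Finset (Fin (n+1)))) : Finset (Finset (Fin (n+1))) :=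
  (bdry n \ X).image fun σ => σᶜ

/-- `X̄`: the smallest simplicial complex containing the hypergraph `X`. -/
def clUp {n : ℕ} (X : Finset (Finset (Fin (n+1)))) : Finset (Finset (Fin (n+1))) :=
  Finset.univ.filter fun τ => τ.Nonempty ∧ ∃ σ ∈ X, τ ⊆ σ

/-- `X̲`: the largest simplicial complex contained in the hypergraph `X`. -/
def clLow {n : ℕ} (X : Finset (Finset (Fin (n+1)))) : Finset (Finset (Fin (n+1))) :=
  Finset.univ.filter fun τ => τ.Nonempty ∧ ∀ σ : Finset (Fin (n+1)), σ ⊆ τ → σ.Nonempty → σ ∈ X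

/-- The Bernoulli measure with parameters `p` on hypergraphs contained in the
ambient set `S` of simplices: `P(X) = ∏_{σ∈X} p σ · ∏_{σ∈S\X} (1 - p σ)`. -/
def bern {n : ℕ} (S : Finset (Finset (Fin (n+1)))) (p : Finset (Fin (n+1)) → ℝ)
    (X : Finset (Finset (Fin (n+1)))) : ℝ :=
  (∏ σ ∈ X, p σ) * ∏ σ ∈ S \ X, (1 - p σ)

/-- The upper measure: `P̄(Y) = Σ_{X ⊆ S, X̄ = Y} P(X)`. -/
def upperP {n : ℕ} (S : Finset (Finset (Fin (n+1)))) (p : Finset (Fin (n+1)) → ℝ)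
    (Y : Finset (Finset (Fin (n+1)))) : ℝ :=
  ∑ X ∈ S.powerset.filter (fun X => clUp X = Y), bern S p X

/-- The lower measure: `P̲(Y) = Σ_{X ⊆ S, X̲ = Y} P(X)`. -/
def lowerP {n : ℕ} (S : Finset (Finset (Fin (n+1)))) (p : Finset (Fin (n+1)) → ℝ)
    (Y : Finset (Finset (Fin (n+1)))) : ℝ :=
  ∑ X ∈ S.powerset.filter (fun X => clLow X = Y), bern S p X

/-- External simplices of `Y` relative to the ambient set `S`: simplices
`σ ∈ S` with `σ ∉ Y` but every nonempty proper subset of `σ` in `Y`. -/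
def extSimp {n : ℕ} (S Y : Finset (Finset (Fin (n+1)))) : Finset (Finset (Fin (n+1))) :=
  S.filter fun σ => σ ∉ Y ∧ ∀ τ : Finset (Fin (n+1)), τ ⊂ σ → τ.Nonempty → τ ∈ Y

/-- Maximal simplices of `Y`: simplices of `Y` not properly contained in another
simplex of `Y`. -/
def maxSimp {n : ℕ} (Y : Finset (Finset (Fin (n+1)))) : Finset (Finset (Fin (n+1))) :=
  Y.filter fun σ => ∀ τ ∈ Y, σ ⊆ τ → σ = τ

/-- The expected number of `k`-dimensional simplices of the upper-model random
complex in `Δₙ` with parameters `p_σ = n^{-α_i}` for `dim σ = i ≤ r` and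
`p_σ = 0` for `dim σ > r`. -/
noncomputable def expectedFk (r : ℕ) (α : ℕ → ℝ) (k n : ℕ) : ℝ :=
  ∑ Y ∈ (simplexAll n).powerset.filter (fun Y => IsComplex Y),
    ((Y.filter (fun σ => σ.card = k+1)).card : ℝ) *
      upperP (simplexAll n)
        (fun σ => if σ.card ≤ r+1 then (n : ℝ) ^ (-(α (σ.card - 1))) else 0) Y

/-! Up to constants, `1 - ∏ᵢ (1 - xᵢ)^{Nᵢ}` is `min 1 (∑ᵢ Nᵢ xᵢ)`, so the expected number of
`k`-faces is comparable to `n^{k+1} · min 1 (∑ᵢ n^{i-k-αᵢ})`. Taking `log · / log n` turns products,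
sums and minima into sums, maxima and minima of exponents, which gives
`γ_k = min (k + 1) (max_{k ≤ i ≤ r} βᵢ)`. -/

section Expectation

variable {n : ℕ} (S : Finset (Finset (Fin (n + 1)))) (p : Finset (Fin (n + 1)) → ℝ)

lemma isComplex_clUp (X : Finset (Finset (Fin (n + 1)))) : IsComplex (clUp X) := by
  intro σ hσ τ hτσ hτ
  simp only [clUp, mem_filter, mem_univ, true_and] at hσ ⊢
  obtain ⟨-, ρ, hρ, hσρ⟩ := hσ
  exact ⟨hτ, ρ, hρ, hτσ.trans hσρ⟩

lemma clUp_subset_simplexAll (X : Finset (Finset (Fin (n + 1)))) : clUp X ⊆ simplexAll n :=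
  monotone_filter_right _ fun _ _ h => h.1

lemma sum_mul_upperP (φ : Finset (Finset (Fin (n + 1))) → ℝ) :
    ∑ Y ∈ (simplexAll n).powerset with IsComplex Y, φ Y * upperP S p Y
      = ∑ X ∈ S.powerset, φ (clUp X) * bern S p X := by
  have hmaps : ∀ X ∈ S.powerset, clUp X ∈ {Y ∈ (simplexAll n).powerset | IsComplex Y} := fun X _ =>
    mem_filter.mpr ⟨mem_powerset.mpr (clUp_subset_simplexAll X), isComplex_clUp X⟩
  rw [← sum_fiberwise_of_maps_to hmaps]
  refine sum_congr rfl fun Y _ => ?_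
  rw [upperP, mul_sum]
  refine sum_congr rfl fun X hX => ?_
  rw [(mem_filter.mp hX).2]

lemma sum_powerset_bern : ∑ X ∈ S.powerset, bern S p X = 1 := by
  simpa [bern] using (prod_add p (fun σ => 1 - p σ) S).symm

variable {S} in
lemma bern_eq_bern_mul_prod_sdiff {T X : Finset (Finset (Fin (n + 1)))} (hXT : X ⊆ T)
    (hTS : T ⊆ S) : bern S p X = bern T p X * ∏ τ ∈ S \ T, (1 - p τ) := by
  have hsplit : (S \ X) \ (S \ T) = T \ X := by grind
  rw [bern, bern, mul_assoc, ← hsplit, prod_sdiff (sdiff_subset_sdiff Subset.rfl hXT)]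

variable {S} in
lemma sum_powerset_bern_of_subset {T : Finset (Finset (Fin (n + 1)))} (hTS : T ⊆ S) :
    ∑ X ∈ T.powerset, bern S p X = ∏ τ ∈ S \ T, (1 - p τ) := by
  rw [sum_congr rfl fun X hX => bern_eq_bern_mul_prod_sdiff p (mem_powerset.mp hX) hTS,
    ← sum_mul, sum_powerset_bern, one_mul]

lemma sum_bern_mem_clUp {σ : Finset (Fin (n + 1))} (hσ : σ.Nonempty) :
    ∑ X ∈ S.powerset with σ ∈ clUp X, bern S p X
      = 1 - ∏ τ ∈ S with σ ⊆ τ, (1 - p τ) := by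
  have havoid : {X ∈ S.powerset | σ ∉ clUp X} = {τ ∈ S | ¬ σ ⊆ τ}.powerset := by
    ext X
    simp only [clUp, mem_filter, mem_powerset, mem_univ, true_and, hσ, not_exists, not_and,
      subset_iff (s₁ := X)]
    grind
  have htotal := sum_filter_add_sum_filter_not S.powerset (fun X => σ ∈ clUp X) (bern S p)
  rw [havoid, sum_powerset_bern_of_subset p (filter_subset _ _), sum_powerset_bern,
    filter_not, Finset.sdiff_sdiff_eq_self (filter_subset _ _)] at htotal
  linarith

theorem sum_card_faces_mul_upperP (m : ℕ) :
    ∑ Y ∈ (simplexAll n).powerset with IsComplex Y,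
        (#{σ ∈ Y | #σ = m + 1} : ℝ) * upperP S p Y
      = ∑ σ ∈ powersetCard (m + 1) univ, (1 - ∏ τ ∈ S with σ ⊆ τ, (1 - p τ)) := by
  have hcount (X : Finset (Finset (Fin (n + 1)))) :
      (#{σ ∈ clUp X | #σ = m + 1} : ℝ) * bern S p X
        = ∑ σ ∈ powersetCard (m + 1) univ, if σ ∈ clUp X then bern S p X else 0 := by
    rw [← sum_filter, sum_const, nsmul_eq_mul]
    congr 3
    ext σ
    simp [mem_powersetCard, and_comm]
  simp_rw [sum_mul_upperP, hcount]
  rw [sum_comm]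
  refine sum_congr rfl fun σ hσ => ?_
  rw [← sum_filter, sum_bern_mem_clUp]
  exact card_pos.mp (by simp [(mem_powersetCard.mp hσ).2])

end Expectation

section Supersets

lemma card_filter_superset_card_eq {V : Type*} [Fintype V] [DecidableEq V] (σ : Finset V) {m : ℕ}
    (hm : #σ ≤ m) :
    #{τ | σ ⊆ τ ∧ #τ = m} = (Fintype.card V - #σ).choose (m - #σ) := by
  rw [← card_compl, ← card_powersetCard]
  refine card_nbij' (· \ σ) (σ ∪ ·) ?_ ?_ ?_ ?_
  · intro τ hτ
    simp only [mem_coe, mem_filter, mem_univ, true_and] at hτ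
    simp only [mem_coe, mem_powersetCard, card_sdiff_of_subset hτ.1, hτ.2, and_true]
    exact fun a ha => mem_compl.mpr (mem_sdiff.mp ha).2
  · intro υ hυ
    obtain ⟨hυσ, hcard⟩ := mem_powersetCard.mp (mem_coe.mp hυ)
    have hdisj : Disjoint σ υ := (subset_compl_iff_disjoint_left).mp hυσ
    simp [card_union_of_disjoint hdisj, hcard, hm]
  · intro τ hτ
    simp only [mem_coe, mem_filter, mem_univ, true_and] at hτ
    exact union_sdiff_of_subset hτ.1
  · intro υ hυ
    have hdisj : Disjoint σ υ :=
      (subset_compl_iff_disjoint_left).mp (mem_powersetCard.mp (mem_coe.mp hυ)).1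
    exact union_sdiff_cancel_left hdisj

lemma prod_supersets_one_sub {n k : ℕ} (r : ℕ) (x : ℕ → ℝ) {σ : Finset (Fin (n + 1))}
    (hσ : #σ = k + 1) :
    ∏ τ ∈ simplexAll n with σ ⊆ τ, (1 - if #τ ≤ r + 1 then x (#τ - 1) else 0)
      = ∏ i ∈ Icc k r, (1 - x i) ^ (n - k).choose (i - k) := by
  set U := {τ ∈ simplexAll n | σ ⊆ τ} with hU
  have hcard_le {τ : Finset (Fin (n + 1))} (hτ : σ ⊆ τ) : k + 1 ≤ #τ := hσ ▸ card_le_card hτ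
  have hdim : ∀ τ ∈ {τ ∈ U | #τ ≤ r + 1}, #τ - 1 ∈ Icc k r := by
    intro τ hτ
    simp only [hU, mem_filter, mem_Icc] at hτ ⊢
    have := hcard_le hτ.1.2
    omega
  have hfiber : ∀ i ∈ Icc k r,
      #{τ ∈ {τ ∈ U | #τ ≤ r + 1} | #τ - 1 = i} = (n - k).choose (i - k) := by
    intro i hi
    have hki := mem_Icc.mp hi
    have hcount := card_filter_superset_card_eq σ (m := i + 1) (by omega)
    rw [hσ, Fintype.card_fin, Nat.add_sub_add_right, Nat.add_sub_add_right] at hcount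
    rw [← hcount]
    congr 1
    ext τ
    simp only [hU, simplexAll, mem_filter, mem_univ, true_and, ← card_pos]
    grind
  calc ∏ τ ∈ U, (1 - if #τ ≤ r + 1 then x (#τ - 1) else 0)
      = ∏ τ ∈ U with #τ ≤ r + 1, (1 - x (#τ - 1)) := by
        rw [prod_filter (fun τ => #τ ≤ r + 1)]
        exact prod_congr rfl fun τ _ => by split_ifs <;> simp
    _ = ∏ i ∈ Icc k r, ∏ τ ∈ {τ ∈ U | #τ ≤ r + 1} with #τ - 1 = i, (1 - x i) :=
        (prod_fiberwise_of_maps_to' hdim fun i => 1 - x i).symm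
    _ = ∏ i ∈ Icc k r, (1 - x i) ^ (n - k).choose (i - k) :=
        prod_congr rfl fun i hi => by rw [prod_const, hfiber i hi]

end Supersets

theorem expectedFk_eq (r : ℕ) (α : ℕ → ℝ) (k n : ℕ) :
    expectedFk r α k n
      = ((n + 1).choose (k + 1) : ℝ) *
          (1 - ∏ i ∈ Icc k r, (1 - (n : ℝ) ^ (-(α i))) ^ (n - k).choose (i - k)) := by
  rw [expectedFk, sum_card_faces_mul_upperP, sum_congr rfl fun σ hσ => by
    rw [prod_supersets_one_sub r (fun i => (n : ℝ) ^ (-(α i))) (mem_powersetCard.mp hσ).2],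
    sum_const, card_powersetCard, card_univ, Fintype.card_fin, nsmul_eq_mul]

section ProductBounds

variable {ι : Type*} {s : Finset ι} {x : ι → ℝ}

lemma one_sub_prod_one_sub_le_sum {R : Type*} [CommRing R] [LinearOrder R] [IsStrictOrderedRing R]
    {x : ι → R} (h₀ : ∀ i ∈ s, 0 ≤ x i) (h₁ : ∀ i ∈ s, x i ≤ 1) :
    1 - ∏ i ∈ s, (1 - x i) ≤ ∑ i ∈ s, x i := by
  induction s using Finset.cons_induction with
  | empty => simp
  | cons a s ha ih =>
    simp only [forall_mem_cons] at h₀ h₁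
    have hprod_le : ∏ i ∈ s, (1 - x i) ≤ 1 :=
      prod_le_one (fun i hi => sub_nonneg.mpr (h₁.2 i hi)) fun i hi => sub_le_self _ (h₀.2 i hi)
    rw [prod_cons, sum_cons]
    nlinarith [ih h₀.2 h₁.2, mul_le_mul_of_nonneg_left hprod_le h₀.1]

lemma min_one_div_two_le_one_sub_exp_neg {S : ℝ} (hS : 0 ≤ S) :
    min 1 S / 2 ≤ 1 - Real.exp (-S) := by
  have hexp : Real.exp (-S) ≤ (1 + S)⁻¹ := by
    rw [Real.exp_neg]
    exact inv_anti₀ (by linarith) (by linarith [Real.add_one_le_exp S])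
  have hfrac : min 1 S / 2 ≤ 1 - (1 + S)⁻¹ := by
    rw [show 1 - (1 + S)⁻¹ = S / (1 + S) by field_simp; ring,
      div_le_div_iff₀ two_pos (by linarith)]
    rcases min_cases 1 S with ⟨hmin, h⟩ | ⟨hmin, h⟩ <;> rw [hmin] <;> nlinarith
  linarith

lemma min_one_sum_div_two_le_one_sub_prod (h₀ : ∀ i ∈ s, 0 ≤ x i) (h₁ : ∀ i ∈ s, x i ≤ 1) :
    min 1 (∑ i ∈ s, x i) / 2 ≤ 1 - ∏ i ∈ s, (1 - x i) := by
  have hprod : ∏ i ∈ s, (1 - x i) ≤ Real.exp (-∑ i ∈ s, x i) := by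
    rw [← sum_neg_distrib, Real.exp_sum]
    exact prod_le_prod (fun i hi => sub_nonneg.mpr (h₁ i hi))
      fun i _ => Real.one_sub_le_exp_neg (x i)
  linarith [min_one_div_two_le_one_sub_exp_neg (sum_nonneg h₀)]

lemma one_sub_prod_one_sub_mem_Icc (h₀ : ∀ i ∈ s, 0 ≤ x i) (h₁ : ∀ i ∈ s, x i ≤ 1) :
    1 - ∏ i ∈ s, (1 - x i) ∈ Set.Icc (min 1 (∑ i ∈ s, x i) / 2) (min 1 (∑ i ∈ s, x i)) :=
  ⟨min_one_sum_div_two_le_one_sub_prod h₀ h₁,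
    le_min (sub_le_self _ (prod_nonneg fun i hi => sub_nonneg.mpr (h₁ i hi)))
      (one_sub_prod_one_sub_le_sum h₀ h₁)⟩

lemma one_sub_prod_one_sub_pow_mem_Icc (N : ι → ℕ) (h₀ : ∀ i ∈ s, 0 ≤ x i)
    (h₁ : ∀ i ∈ s, x i ≤ 1) :
    1 - ∏ i ∈ s, (1 - x i) ^ N i ∈
      Set.Icc (min 1 (∑ i ∈ s, N i * x i) / 2) (min 1 (∑ i ∈ s, N i * x i)) := by
  have hsigma := one_sub_prod_one_sub_mem_Icc (s := s.sigma fun i => range (N i))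
    (x := fun j => x j.1) (fun j hj => h₀ j.1 (mem_sigma.mp hj).1)
    fun j hj => h₁ j.1 (mem_sigma.mp hj).1
  simpa [prod_sigma, sum_sigma] using hsigma

end ProductBounds

section GrowthExponent

open Filter Asymptotics Topology

/-- `f` is eventually positive and grows like `n ^ (γ + o(1))`. Positivity is part of the notion
because `Real.log` has junk values on nonpositive numbers. -/
def HasGrowthExponent (f : ℕ → ℝ) (γ : ℝ) : Prop :=
  (∀ᶠ n in atTop, 0 < f n) ∧ Tendsto (fun n => Real.log (f n) / Real.log n) atTop (𝓝 γ)

lemma tendsto_log_natCast_atTop : Tendsto (fun n : ℕ => Real.log n) atTop atTop :=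
  Real.tendsto_log_atTop.comp tendsto_natCast_atTop_atTop

lemma hasGrowthExponent_rpow (a : ℝ) : HasGrowthExponent (fun n => (n : ℝ) ^ a) a := by
  have hpos : ∀ᶠ n : ℕ in atTop, (0 : ℝ) < n :=
    (eventually_gt_atTop 0).mono fun n hn => Nat.cast_pos.mpr hn
  refine ⟨hpos.mono fun n hn => Real.rpow_pos_of_pos hn a, tendsto_const_nhds.congr' ?_⟩
  filter_upwards [hpos, tendsto_log_natCast_atTop.eventually_gt_atTop 0] with n hn hlog
  rw [Real.log_rpow hn, mul_div_cancel_right₀ _ hlog.ne']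

lemma hasGrowthExponent_one : HasGrowthExponent (fun _ => 1) 0 := by
  simpa using hasGrowthExponent_rpow 0

lemma isBigO_one_log_sub_log_of_isTheta {ι : Type*} {l : Filter ι} {f g : ι → ℝ}
    (hf : ∀ᶠ n in l, 0 < f n) (hg : ∀ᶠ n in l, 0 < g n) (hfg : f =Θ[l] g) :
    (fun n => Real.log (f n) - Real.log (g n)) =O[l] fun _ => (1 : ℝ) := by
  obtain ⟨C, hC, hle⟩ := hfg.1.exists_pos
  obtain ⟨D, hD, hge⟩ := hfg.2.exists_pos
  refine IsBigO.of_bound (max (Real.log C) (Real.log D)) ?_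
  filter_upwards [hf, hg, hle.bound, hge.bound] with n hf hg hle hge
  rw [Real.norm_of_nonneg hf.le, Real.norm_of_nonneg hg.le] at hle hge
  have hupper := Real.log_le_log hf hle
  have hlower := Real.log_le_log hg hge
  rw [Real.log_mul hC.ne' hg.ne'] at hupper
  rw [Real.log_mul hD.ne' hf.ne'] at hlower
  rw [norm_one, mul_one, Real.norm_eq_abs, abs_le]
  constructor <;> linarith [le_max_left (Real.log C) (Real.log D),
    le_max_right (Real.log C) (Real.log D)]

namespace HasGrowthExponent

variable {f g : ℕ → ℝ} {γ δ : ℝ}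

lemma of_isTheta (hg : HasGrowthExponent g γ) (hf : ∀ᶠ n in atTop, 0 < f n)
    (hfg : f =Θ[atTop] g) : HasGrowthExponent f γ := by
  have hlog : (fun _ => (1 : ℝ)) =o[atTop] fun n : ℕ => Real.log n :=
    (isLittleO_const_left_of_ne one_ne_zero).mpr
      (tendsto_norm_atTop_atTop.comp tendsto_log_natCast_atTop)
  have hdiff :=
    ((isBigO_one_log_sub_log_of_isTheta hf hg.1 hfg).trans_isLittleO hlog).tendsto_div_nhds_zero
  refine ⟨hf, ?_⟩
  simpa [sub_div] using hdiff.add hg.2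

protected lemma mul (hf : HasGrowthExponent f γ) (hg : HasGrowthExponent g δ) :
    HasGrowthExponent (fun n => f n * g n) (γ + δ) := by
  refine ⟨hf.1.and hg.1 |>.mono fun n h => mul_pos h.1 h.2, (hf.2.add hg.2).congr' ?_⟩
  filter_upwards [hf.1, hg.1] with n hf hg
  rw [Real.log_mul hf.ne' hg.ne', add_div]

protected lemma min (hf : HasGrowthExponent f γ) (hg : HasGrowthExponent g δ) :
    HasGrowthExponent (fun n => min (f n) (g n)) (min γ δ) := by
  refine ⟨hf.1.and hg.1 |>.mono fun n h => lt_min h.1 h.2, (hf.2.min hg.2).congr' ?_⟩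
  filter_upwards [hf.1, hg.1] with n hf hg
  rw [min_div_div_right (Real.log_natCast_nonneg n),
    Real.strictMonoOn_log.monotoneOn.map_min hf hg]

protected lemma max (hf : HasGrowthExponent f γ) (hg : HasGrowthExponent g δ) :
    HasGrowthExponent (fun n => max (f n) (g n)) (max γ δ) := by
  refine ⟨hf.1.mono fun n h => lt_max_of_lt_left h, (hf.2.max hg.2).congr' ?_⟩
  filter_upwards [hf.1, hg.1] with n hf hg
  rw [max_div_div_right (Real.log_natCast_nonneg n),
    Real.strictMonoOn_log.monotoneOn.map_max hf hg]

protected lemma add (hf : HasGrowthExponent f γ) (hg : HasGrowthExponent g δ) :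
    HasGrowthExponent (fun n => f n + g n) (max γ δ) := by
  refine (hf.max hg).of_isTheta (hf.1.and hg.1 |>.mono fun n h => add_pos h.1 h.2) ⟨?_, ?_⟩
  · refine IsBigO.of_bound 2 ?_
    filter_upwards [hf.1, hg.1] with n hf hg
    rw [Real.norm_of_nonneg (add_pos hf hg).le, Real.norm_of_nonneg (lt_max_of_lt_left hf).le]
    linarith [le_max_left (f n) (g n), le_max_right (f n) (g n)]
  · refine IsBigO.of_bound' ?_
    filter_upwards [hf.1, hg.1] with n hf hg
    rw [Real.norm_of_nonneg (add_pos hf hg).le, Real.norm_of_nonneg (lt_max_of_lt_left hf).le]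
    exact max_le_add_of_nonneg hf.le hg.le

protected lemma sum {ι : Type*} {s : Finset ι} (hs : s.Nonempty) {f : ι → ℕ → ℝ} {γ : ι → ℝ}
    (hf : ∀ i ∈ s, HasGrowthExponent (f i) (γ i)) :
    HasGrowthExponent (fun n => ∑ i ∈ s, f i n) (s.sup' hs γ) := by
  induction hs using Finset.Nonempty.cons_induction with
  | singleton a => simpa using hf
  | cons a s ha hs ih =>
    rw [forall_mem_cons] at hf
    simpa only [sum_cons, sup'_cons hs] using hf.1.add (ih hf.2)

end HasGrowthExponent

lemma hasGrowthExponent_choose {u : ℕ → ℕ}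
    (hu : (fun n => (u n : ℝ)) =Θ[atTop] fun n : ℕ => (n : ℝ)) (m : ℕ) :
    HasGrowthExponent (fun n => ((u n).choose m : ℝ)) m := by
  have hu_atTop : Tendsto u atTop atTop := by
    have hnorm := hu.tendsto_norm_atTop_iff.mpr
      (tendsto_norm_atTop_atTop.comp tendsto_natCast_atTop_atTop)
    exact tendsto_natCast_atTop_iff.mp (by simpa [Function.comp_def] using hnorm)
  have hpos : ∀ᶠ n in atTop, (0 : ℝ) < (u n).choose m :=
    (hu_atTop.eventually_ge_atTop m).mono fun n hn => Nat.cast_pos.mpr (Nat.choose_pos hn)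
  refine (hasGrowthExponent_rpow m).of_isTheta hpos ?_
  have hchoose : (fun n => ((u n).choose m : ℝ)) =Θ[atTop] fun n => (u n : ℝ) ^ m :=
    ⟨(isTheta_choose m).1.comp_tendsto hu_atTop, (isTheta_choose m).2.comp_tendsto hu_atTop⟩
  simpa only [Real.rpow_natCast] using hchoose.trans (hu.pow m)

lemma isLittleO_const_natCast_atTop (c : ℝ) : (fun _ => c) =o[atTop] fun n : ℕ => (n : ℝ) :=
  (isLittleO_const_id_atTop c).comp_tendsto tendsto_natCast_atTop_atTop

lemma hasGrowthExponent_choose_add (c m : ℕ) :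
    HasGrowthExponent (fun n => ((n + c).choose m : ℝ)) m := by
  refine hasGrowthExponent_choose ?_ m
  simp_rw [Nat.cast_add]
  exact (IsEquivalent.refl.add_isLittleO (isLittleO_const_natCast_atTop c)).isTheta

lemma hasGrowthExponent_choose_sub (c m : ℕ) :
    HasGrowthExponent (fun n => ((n - c).choose m : ℝ)) m := by
  refine hasGrowthExponent_choose (EventuallyEq.trans_isTheta ?_
    (IsEquivalent.refl.sub_isLittleO (isLittleO_const_natCast_atTop c)).isTheta) m
  filter_upwards [eventually_ge_atTop c] with n hn using Nat.cast_sub hn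

lemma HasGrowthExponent.one_sub_prod_one_sub_pow {ι : Type*} {s : Finset ι} {x : ι → ℕ → ℝ}
    {N : ι → ℕ → ℕ} {γ : ℝ} (hx : ∀ᶠ n in atTop, ∀ i ∈ s, x i n ∈ Set.Icc 0 1)
    (hsum : HasGrowthExponent (fun n => ∑ i ∈ s, N i n * x i n) γ) :
    HasGrowthExponent (fun n => 1 - ∏ i ∈ s, (1 - x i n) ^ N i n) (min 0 γ) := by
  have hmin := hasGrowthExponent_one.min hsum
  have hbounds := hx.mono fun n h => one_sub_prod_one_sub_pow_mem_Icc (fun i => N i n)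
    (fun i hi => (h i hi).1) fun i hi => (h i hi).2
  have hpos := (hbounds.and hmin.1).mono fun n h => (half_pos h.2).trans_le h.1.1
  refine hmin.of_isTheta hpos ⟨IsBigO.of_bound' ?_, IsBigO.of_bound 2 ?_⟩
  all_goals
    filter_upwards [hbounds, hpos, hmin.1] with n hn hpos hmin
    rw [Real.norm_of_nonneg hpos.le, Real.norm_of_nonneg hmin.le]
    linarith [hn.1, hn.2]

theorem hasGrowthExponent_expectedFk {r k : ℕ} {α : ℕ → ℝ} (hα : ∀ i ≤ r, 0 ≤ α i) (hk : k ≤ r) :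
    HasGrowthExponent (expectedFk r α k)
      (min ((k : ℝ) + 1)
        ((Icc k r).sup' (nonempty_Icc.mpr hk) fun i => (i : ℝ) + 1 - α i)) := by
  have hparam : ∀ᶠ n : ℕ in atTop, ∀ i ∈ Icc k r, (n : ℝ) ^ (-α i) ∈ Set.Icc 0 1 := by
    filter_upwards [eventually_ge_atTop 1] with n hn i hi
    exact ⟨by positivity, Real.rpow_le_one_of_one_le_of_nonpos (mod_cast hn)
      (neg_nonpos.mpr (hα i (mem_Icc.mp hi).2))⟩
  have hsum := HasGrowthExponent.sum (nonempty_Icc.mpr hk) fun i _ =>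
    (hasGrowthExponent_choose_sub k (i - k)).mul (hasGrowthExponent_rpow (-α i))
  have hmul := (hasGrowthExponent_choose_add 1 (k + 1)).mul
    (HasGrowthExponent.one_sub_prod_one_sub_pow hparam hsum)
  convert hmul using 1
  · exact funext fun n => expectedFk_eq r α k n
  · rw [← min_add_add_left, add_zero, add_sup', Nat.cast_succ]
    congr 1
    refine sup'_congr _ rfl fun i hi => ?_
    rw [Nat.cast_sub (mem_Icc.mp hi).1]
    ring

end GrowthExponent

lemma min_sup'_Icc_eq_ite {r k istar : ℕ} {β : ℕ → ℝ} (hk : k ≤ r) (hir : istar ≤ r)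
    (hmax : ∀ i ≤ r, β i ≤ β istar) (hβ : β istar ≤ istar + 1) :
    min ((k : ℝ) + 1) ((Icc k r).sup' (nonempty_Icc.mpr hk) β)
      = if (k : ℤ) < ⌊β istar⌋ then (k : ℝ) + 1
        else if k ≤ istar then β istar
        else (Icc k r).sup' (nonempty_Icc.mpr hk) β := by
  have hsup_le : (Icc k r).sup' (nonempty_Icc.mpr hk) β ≤ β istar :=
    sup'_le _ _ fun i hi => hmax i (mem_Icc.mp hi).2
  have hsup_eq (h : k ≤ istar) : (Icc k r).sup' (nonempty_Icc.mpr hk) β = β istar :=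
    hsup_le.antisymm (le_sup' β (mem_Icc.mpr ⟨h, hir⟩))
  split_ifs with hfloor histar
  · have hle : (k : ℝ) + 1 ≤ β istar := by exact_mod_cast Int.le_floor.mp hfloor
    have hki : k ≤ istar := by exact_mod_cast (add_le_add_iff_right 1).mp (hle.trans hβ)
    rw [hsup_eq hki, min_eq_left hle]
  all_goals
    have hlt : β istar < k + 1 := by
      exact_mod_cast Int.floor_lt.mp (Int.lt_add_one_iff.mpr (not_lt.mp hfloor))
    rw [min_eq_right (hsup_le.trans hlt.le)]
  exact hsup_eq histar

theorem growth_exponents_general (r : ℕ) (α : ℕ → ℝ) (hα : ∀ i ≤ r, 0 ≤ α i)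
    (β : ℕ → ℝ) (hβ : ∀ i, β i = (i : ℝ) + 1 - α i)
    (βstar : ℝ)
    (hβstar : βstar = (range (r + 1)).sup' ⟨0, mem_range.mpr r.succ_pos⟩ β)
    (kstar : ℤ) (hkstar : kstar = ⌊βstar⌋)
    (istar : ℕ) (histar : istar ≤ r ∧ β istar = βstar)
    (k : ℕ) (hk : k ≤ r) :
    (∀ n : ℕ, 1 ≤ n →
      expectedFk r α k n
        = ((n + 1).choose (k + 1) : ℝ) *
            (1 - ∏ i ∈ Icc k r, (1 - (n : ℝ) ^ (-(α i))) ^ ((n - k).choose (i - k)))) ∧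
    Filter.Tendsto (fun n : ℕ => Real.log (expectedFk r α k n) / Real.log n)
      Filter.atTop
      (nhds (if (k : ℤ) < kstar then (k : ℝ) + 1
             else if k ≤ istar then βstar
             else (Icc k r).sup' (nonempty_Icc.mpr hk) β)) := by
  obtain ⟨hir, rfl⟩ := histar
  have hmax : ∀ i ≤ r, β i ≤ β istar := fun i hi =>
    hβstar ▸ le_sup' β (mem_range.mpr (Nat.lt_succ_of_le hi))
  have hle : β istar ≤ istar + 1 := hβ istar ▸ sub_le_self _ (hα istar hir)
  refine ⟨fun n _ => expectedFk_eq r α k n, ?_⟩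
  rw [hkstar, ← min_sup'_Icc_eq_ite hk hir hmax hle, funext hβ]
  exact (hasGrowthExponent_expectedFk hα hk).2

/-- Growth exponents of expected face numbers in the upper model. With generic
exponents `α_0,…,α_r > 0`, `β_i = i+1-α_i`, `β* = max β_i`, `k* = ⌊β*⌋ ≥ 0`
(the critical dimension), `i*` the unique index with `β_{i*} = β*`, and
`β*_k = max{β_k,…,β_r}`: the expected number of `k`-faces satisfies
`E_n(f_k) = C(n+1,k+1)·(1 - ∏_{i=k}^r (1-n^{-α_i})^{C(n-k,i-k)})`, and
`γ_k = lim_{n→∞} log E_n(f_k)/log n` exists and equals `k+1` for `k < k*`,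
`β*` for `k* ≤ k ≤ i*`, and `β*_k` for `k > i*`. -/
theorem growth_exponents (r : ℕ) (α : ℕ → ℝ)
    (hpos : ∀ i ≤ r, 0 < α i)
    (hint : ∀ i ≤ r, ∀ m : ℤ, α i ≠ (m : ℝ))
    (hdiff : ∀ i ≤ r, ∀ j ≤ r, i ≠ j → ∀ m : ℤ, α i - α j ≠ (m : ℝ))
    (β : ℕ → ℝ) (hβ : ∀ i, β i = (i : ℝ) + 1 - α i)
    (βstar : ℝ)
    (hβstar : βstar = (Finset.range (r+1)).sup'
      ⟨0, Finset.mem_range.mpr r.succ_pos⟩ β)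
    (kstar : ℤ) (hkstar : kstar = ⌊βstar⌋) (hk0 : 0 ≤ kstar)
    (istar : ℕ) (histar : istar ≤ r ∧ β istar = βstar)
    (k : ℕ) (hk : k ≤ r) :
    (∀ n : ℕ, 1 ≤ n →
      expectedFk r α k n
        = ((n+1).choose (k+1) : ℝ) *
            (1 - ∏ i ∈ Finset.Icc k r,
              (1 - (n : ℝ) ^ (-(α i))) ^ ((n-k).choose (i-k)))) ∧
    Filter.Tendsto (fun n : ℕ => Real.log (expectedFk r α k n) / Real.log n)
      Filter.atTop
      (nhds (if (k : ℤ) < kstar then (k : ℝ) + 1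
             else if k ≤ istar then βstar
             else (Finset.Icc k r).sup' (Finset.nonempty_Icc.mpr hk) β)) :=
  growth_exponents_general r α (fun i hi => (hpos i hi).le) β hβ βstar hβstar kstar hkstar
    istar histar k hk
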